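/- ₂F₁(a+1/2, 1/2−a; 1−a; (1−√2)/2) = √π · 2^{2a−1/4} (√2−1)^{a} Γ(1−a) / (Γ(5/8 − a/2) Γ(7/8 − a/2)) for every real a with a < 1/2 and a not a nonpositive... with 1−a not a nonpositive integer (e.g. for all real a < 1/2). -/

import Mathlib

noncomputable def poch (a : ℝ) (n : ℕ) : ℝ := ∏ i ∈ Finset.range n, (a + i)

/-!
By Euler's integral, the series is `1 / B(u, 1/2)` times the integral over `(0, 1)` of
`(t (1 - w t)) ^ (u - 1) * (1 - t) ^ (-1/2)`, where `u = 1/2 - a` and `w = (1 - √2) / 2`. For this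
`w`, completing the square in `t (1 - w t)` and substituting `t = (√2 + 1) (√2 cos (θ / 2) - 1)`
gives `t (1 - w t) = (√2 + 1) / 2 * cos θ`, and the integral becomes a multiple of Cauchy's integral
`∫ cos θ ^ (u - 1) * cos (θ / 4)` over `(0, π / 2)`. Cauchy's integral satisfies a two-step
recurrence in `u`, which is iterated to infinity: there `cos θ ^ (u - 1)` concentrates at `θ = 0`,
so that the frequency no longer matters and Wallis' formula gives the limit.
-/

open Filter MeasureTheory Real Set Topology
open ProbabilityTheory (beta)

section Pochhammer

lemma poch_succ (a : ℝ) (n : ℕ) : poch a (n + 1) = poch a n * (a + n) :=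
  Finset.prod_range_succ _ _

lemma poch_pos {a : ℝ} (ha : 0 < a) (n : ℕ) : 0 < poch a n :=
  Finset.prod_pos fun _ _ => by positivity

lemma poch_neg_natCast_eq_zero {m n : ℕ} (h : m < n) : poch (-m) n = 0 :=
  Finset.prod_eq_zero (Finset.mem_range.2 h) (neg_add_cancel _)

lemma poch_eq_ascPochhammer_eval (a : ℝ) (n : ℕ) : poch a n = (ascPochhammer ℝ n).eval a := by
  induction n with
  | zero => simp [poch]
  | succ n ih => rw [poch_succ, ih, ascPochhammer_succ_eval]

lemma ringChoose_eq_poch_div_factorial (a : ℝ) (n : ℕ) :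
    Ring.choose (a + n - 1) n = poch a n / n.factorial := by
  rw [Ring.choose_eq_smul, Polynomial.descPochhammer_smeval_eq_ascPochhammer,
    Polynomial.ascPochhammer_smeval_cast, Polynomial.ascPochhammer_smeval_eq_eval,
    poch_eq_ascPochhammer_eval, smul_eq_mul]
  ring_nf

lemma hasSum_poch_div_factorial_mul_pow (a : ℝ) {x : ℝ} (hx : |x| < 1) :
    HasSum (fun n => poch a n / n.factorial * x ^ n) ((1 - x) ^ (-a)) := by
  have h := (one_div_one_sub_rpow_hasFPowerSeriesOnBall_zero a).hasSum (y := x)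
    (by simpa [Metric.eball_ofReal, ← ENNReal.ofReal_one] using hx)
  rw [zero_add, one_div, ← rpow_neg (by linarith [(abs_lt.1 hx).2])] at h
  simpa only [FormalMultilinearSeries.ofScalars_apply_eq, smul_eq_mul,
    ringChoose_eq_poch_div_factorial] using h

lemma Gamma_add_natCast {a : ℝ} (ha : 0 < a) (n : ℕ) : Gamma (a + n) = poch a n * Gamma a := by
  induction n with
  | zero => simp [poch]
  | succ n ih =>
    rw [Nat.cast_succ, ← add_assoc, Gamma_add_one (by positivity), ih, poch_succ]
    ring

lemma tendsto_poch_succ_div_inv_Gamma (s : ℝ) :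
    Tendsto (fun n : ℕ => poch s (n + 1) / (n ^ s * n.factorial)) atTop (𝓝 (Gamma s)⁻¹) := by
  by_cases hs : Gamma s = 0
  · obtain ⟨m, rfl⟩ := (Gamma_eq_zero_iff s).1 hs
    rw [hs, inv_zero]
    refine tendsto_const_nhds.congr' ?_
    filter_upwards [eventually_ge_atTop m] with n hn
    rw [poch_neg_natCast_eq_zero (by lia), zero_div]
  · refine ((GammaSeq_tendsto_Gamma s).inv₀ hs).congr fun n => ?_
    rw [GammaSeq, inv_div, poch]

end Pochhammer

section EulerIntegral

lemma integral_Ioo_rpow_mul_rpow {u v : ℝ} (hu : 0 < u) (hv : 0 < v) :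
    ∫ t in Ioo (0 : ℝ) 1, t ^ (u - 1) * (1 - t) ^ (v - 1) = beta u v := by
  have hB := ProbabilityTheory.beta_pos hu hv
  have h : ∫ t in Ioo (0 : ℝ) 1, 1 / beta u v * t ^ (u - 1) * (1 - t) ^ (v - 1) = 1 := by
    rw [integral_eq_lintegral_of_nonneg_ae ?_ (Measurable.aestronglyMeasurable (by fun_prop)),
      ← ProbabilityTheory.lintegral_betaPDF, ProbabilityTheory.lintegral_betaPDF_eq_one hu hv,
      ENNReal.toReal_one]
    refine ae_restrict_of_forall_mem measurableSet_Ioo fun t ht => ?_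
    have h0 := ht.1
    have h1 := sub_pos.2 ht.2
    simp only [Pi.zero_apply]
    positivity
  simp_rw [mul_assoc, integral_const_mul] at h
  field_simp at h
  exact h

lemma integrableOn_Ioo_rpow_mul_rpow {u v : ℝ} (hu : 0 < u) (hv : 0 < v) :
    IntegrableOn (fun t : ℝ => t ^ (u - 1) * (1 - t) ^ (v - 1)) (Ioo 0 1) :=
  Integrable.of_integral_ne_zero <| by
    rw [integral_Ioo_rpow_mul_rpow hu hv]
    exact (ProbabilityTheory.beta_pos hu hv).ne'

lemma beta_add_natCast_left {u v : ℝ} (hu : 0 < u) (hv : 0 < v) (n : ℕ) :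
    beta (u + n) v = poch u n / poch (u + v) n * beta u v := by
  have hP := poch_pos (add_pos hu hv) n
  rw [beta, beta, Gamma_add_natCast hu, add_right_comm, Gamma_add_natCast (add_pos hu hv)]
  field_simp

lemma integral_Ioo_rpow_mul_rpow_mul_pow {u v : ℝ} (hu : 0 < u) (hv : 0 < v) (n : ℕ) :
    ∫ t in Ioo (0 : ℝ) 1, t ^ (u - 1) * (1 - t) ^ (v - 1) * t ^ n =
      poch u n / poch (u + v) n * beta u v := by
  rw [← beta_add_natCast_left hu hv, ← integral_Ioo_rpow_mul_rpow (by positivity) hv]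
  refine setIntegral_congr_fun measurableSet_Ioo fun t ht => ?_
  rw [add_sub_right_comm, rpow_add_natCast ht.1.ne', mul_right_comm]

/-- Expand `(1 - w * t) ^ (-a)` in its binomial series and integrate term by term. -/
lemma hasSum_poch_eulerIntegral (a : ℝ) {u v w : ℝ} (hu : 0 < u) (hv : 0 < v) (hw : |w| < 1) :
    HasSum (fun n : ℕ => poch a n * poch u n / (poch (u + v) n * n.factorial) * w ^ n)
      ((∫ t in Ioo (0 : ℝ) 1, t ^ (u - 1) * (1 - t) ^ (v - 1) * (1 - w * t) ^ (-a)) /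
        beta u v) := by
  set φ : ℝ → ℝ := fun t => t ^ (u - 1) * (1 - t) ^ (v - 1)
  set c : ℕ → ℝ := fun n => poch a n / n.factorial * w ^ n with hc
  have hφ_nonneg : ∀ t ∈ Ioo (0 : ℝ) 1, 0 ≤ φ t := fun t ht =>
    mul_nonneg (rpow_nonneg ht.1.le _) (rpow_nonneg (sub_pos.2 ht.2).le _)
  have hc_summable : Summable fun n => |c n| :=
    (hasSum_poch_div_factorial_mul_pow a hw).summable.abs
  have hsum : ∀ t ∈ Ioo (0 : ℝ) 1,
      HasSum (fun n => c n * (φ t * t ^ n)) (φ t * (1 - w * t) ^ (-a)) := fun t ht => by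
    have hwt : |w * t| < 1 := by
      rw [abs_mul, abs_of_pos ht.1]
      exact mul_lt_one_of_nonneg_of_lt_one_left (abs_nonneg w) hw ht.2.le
    refine ((hasSum_poch_div_factorial_mul_pow a hwt).mul_left (φ t)).congr_fun fun n => ?_
    simp only [hc, mul_pow]
    ring
  have hbound : ∀ n, ∀ t ∈ Ioo (0 : ℝ) 1, ‖c n * (φ t * t ^ n)‖ ≤ |c n| * φ t := fun n t ht => by
    rw [norm_mul, norm_eq_abs, norm_of_nonneg (mul_nonneg (hφ_nonneg t ht) (pow_nonneg ht.1.le n))]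
    gcongr
    exact mul_le_of_le_one_right (hφ_nonneg t ht) (pow_le_one₀ ht.1.le ht.2.le)
  have key := hasSum_integral_of_dominated_convergence (μ := volume.restrict (Ioo (0 : ℝ) 1))
    (fun n t => |c n| * φ t) (fun n => Measurable.aestronglyMeasurable (by fun_prop))
    (fun n => ae_restrict_of_forall_mem measurableSet_Ioo (hbound n))
    (Eventually.of_forall fun t => hc_summable.mul_right (φ t))
    (by simpa only [tsum_mul_right] using (integrableOn_Ioo_rpow_mul_rpow hu hv).const_mul _)
    (ae_restrict_of_forall_mem measurableSet_Ioo hsum)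
  refine (key.div_const (beta u v)).congr_fun fun n => ?_
  have hB := ProbabilityTheory.beta_pos hu hv
  rw [integral_const_mul, integral_Ioo_rpow_mul_rpow_mul_pow hu hv]
  simp only [hc]
  field_simp

end EulerIntegral

section CauchyCosIntegral

/-- Cauchy's integral of `cos θ ^ (u - 1) * cos (y * θ)` over `(0, π / 2)`. The exponent is shifted
by one, as in the beta integral, so that the integral converges for `0 < u`. -/
noncomputable def cauchyCosIntegral (u y : ℝ) : ℝ :=
  ∫ θ in Ioo 0 (π / 2), cos θ ^ (u - 1) * cos (y * θ)

lemma cos_pos_of_mem_Ioo_zero {θ : ℝ} (hθ : θ ∈ Ioo 0 (π / 2)) : 0 < cos θ :=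
  cos_pos_of_mem_Ioo ⟨by linarith [hθ.1, pi_pos], hθ.2⟩

lemma integrableOn_cos_rpow {s : ℝ} (hs : -1 < s) :
    IntegrableOn (fun θ => cos θ ^ s) (Ioo 0 (π / 2)) := by
  have hpi : 0 ≤ π / 2 := by positivity
  have hsinc : ContinuousOn (fun t => sinc t ^ s) (uIcc 0 (π / 2)) := by
    refine continuous_sinc.continuousOn.rpow_const fun t ht => Or.inl ?_
    rw [uIcc_of_le hpi] at ht
    rcases ht.1.eq_or_lt with rfl | h0
    · simp
    · rw [sinc_of_ne_zero h0.ne']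
      exact (div_pos (sin_pos_of_pos_of_lt_pi h0 (by linarith [ht.2, pi_pos])) h0).ne'
  have hsin : IntervalIntegrable (fun t => sin t ^ s) volume 0 (π / 2) := by
    refine ((intervalIntegral.intervalIntegrable_rpow' hs).mul_continuousOn hsinc).congr
      fun t ht => ?_
    rw [uIoc_of_le hpi] at ht
    have h0 : 0 ≤ sin t := sin_nonneg_of_nonneg_of_le_pi ht.1.le (by linarith [ht.2, pi_pos])
    rw [sinc_of_ne_zero ht.1.ne', div_rpow h0 ht.1.le,
      mul_div_cancel₀ _ (rpow_pos_of_pos ht.1 s).ne']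
  have hcos := (hsin.comp_sub_left (π / 2)).symm
  simp only [sub_self, sub_zero, sin_pi_div_two_sub] at hcos
  rwa [intervalIntegrable_iff_integrableOn_Ioo_of_le hpi] at hcos

lemma integrableOn_cos_rpow_mul_cos {s : ℝ} (hs : -1 < s) (y : ℝ) :
    IntegrableOn (fun θ => cos θ ^ s * cos (y * θ)) (Ioo 0 (π / 2)) :=
  (integrableOn_cos_rpow hs).mul_bdd (c := 1) (Measurable.aestronglyMeasurable (by fun_prop))
    (Eventually.of_forall fun θ => abs_cos_le_one (y * θ))

lemma hasDerivAt_cos_rpow_mul_sin {u y θ : ℝ} (hθ : cos θ ≠ 0) :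
    HasDerivAt
      (fun θ => y * cos θ ^ (u + 1) * sin (y * θ) - (u + 1) * cos θ ^ u * sin θ * cos (y * θ))
      ((u + 1) * u * (cos θ ^ (u - 1) * cos (y * θ)) -
        ((u + 1) ^ 2 - y ^ 2) * (cos θ ^ (u + 2 - 1) * cos (y * θ))) θ := by
  have hy : HasDerivAt (fun θ => y * θ) y θ := by simpa using (hasDerivAt_id θ).const_mul y
  have h0 := (hasDerivAt_cos θ).rpow_const (p := u) (Or.inl hθ)
  have h1 := (hasDerivAt_cos θ).rpow_const (p := u + 1) (Or.inl hθ)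
  refine (((h1.const_mul y).mul hy.sin).sub
    (((h0.const_mul (u + 1)).mul (hasDerivAt_sin θ)).mul hy.cos)).congr_deriv ?_
  have e0 : cos θ ^ u = cos θ ^ (u - 1) * cos θ := by
    rw [← rpow_add_one hθ, sub_add_cancel]
  have e1 : cos θ ^ (u + 1) = cos θ ^ (u - 1) * cos θ ^ 2 := by
    rw [rpow_add_one hθ, e0, mul_assoc, sq]
  rw [show u + 2 - 1 = u + 1 by ring, add_sub_cancel_right, Pi.mul_apply, e1, e0]
  linear_combination ((u + 1) * u * cos θ ^ (u - 1) * cos (y * θ)) * sin_sq θ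

lemma cauchyCosIntegral_add_two {u : ℝ} (hu : 0 < u) (y : ℝ) :
    (u + 1) * u * cauchyCosIntegral u y =
      ((u + 1) ^ 2 - y ^ 2) * cauchyCosIntegral (u + 2) y := by
  have hpi : 0 ≤ π / 2 := by positivity
  have hint0 := (integrableOn_cos_rpow_mul_cos (by linarith : -1 < u - 1) y).const_mul
    ((u + 1) * u)
  have hint2 := (integrableOn_cos_rpow_mul_cos (by linarith : -1 < u + 2 - 1) y).const_mul
    ((u + 1) ^ 2 - y ^ 2)
  have hcont (p : ℝ) (hp : 0 ≤ p) : Continuous fun θ => cos θ ^ p :=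
    continuous_cos.rpow_const fun _ => Or.inr hp
  have hcont0 := hcont u hu.le
  have hcont1 := hcont (u + 1) (by linarith)
  have ftc := intervalIntegral.integral_eq_sub_of_hasDerivAt_of_le hpi
    (Continuous.continuousOn (by fun_prop))
    (fun θ hθ => hasDerivAt_cos_rpow_mul_sin (u := u) (y := y) (cos_pos_of_mem_Ioo_zero hθ).ne')
    ((intervalIntegrable_iff_integrableOn_Ioo_of_le hpi).2 (hint0.sub hint2))
  rw [intervalIntegral.integral_of_le hpi, integral_Ioc_eq_integral_Ioo,
    integral_sub hint0 hint2, integral_const_mul, integral_const_mul] at ftc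
  simp only [cos_pi_div_two, sin_zero, mul_zero, zero_rpow hu.ne',
    zero_rpow (by linarith : u + 1 ≠ 0), zero_mul, sub_zero] at ftc
  exact sub_eq_zero.1 ftc

lemma poch_mul_cauchyCosIntegral {u : ℝ} (hu : 0 < u) (y : ℝ) (n : ℕ) :
    poch ((u + 1) / 2) n * poch (u / 2) n * cauchyCosIntegral u y =
      poch ((u + 1 + y) / 2) n * poch ((u + 1 - y) / 2) n * cauchyCosIntegral (u + 2 * n) y := by
  induction n with
  | zero => simp [poch]
  | succ n ih =>
    have hrec := cauchyCosIntegral_add_two (by positivity : 0 < u + 2 * n) y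
    rw [show u + 2 * ((n + 1 : ℕ) : ℝ) = u + 2 * n + 2 by push_cast; ring]
    simp only [poch_succ]
    linear_combination (((u + 1) / 2 + n) * (u / 2 + n)) * ih +
      (poch ((u + 1 + y) / 2) n * poch ((u + 1 - y) / 2) n / 4) * hrec

lemma integral_Ioo_cos_pow_even (n : ℕ) :
    ∫ θ in Ioo 0 (π / 2), cos θ ^ (2 * n) = π / 2 * (poch (1 / 2) n / n.factorial) := by
  have hprod : ∏ i ∈ Finset.range n, (2 * (i : ℝ) + 1) / (2 * i + 2) =
      poch (1 / 2) n / n.factorial := by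
    rw [← Finset.prod_range_add_one_eq_factorial, poch, Nat.cast_prod, ← Finset.prod_div_distrib]
    refine Finset.prod_congr rfl fun i _ => ?_
    push_cast
    field_simp
    ring
  rw [← integral_Ioc_eq_integral_Ioo, ← intervalIntegral.integral_of_le (by positivity),
    EulerSine.integral_cos_pow_eq, integral_sin_pow_even, hprod]
  ring

/-- Wallis' formula; the shift by one matches `tendsto_poch_succ_div_inv_Gamma`. -/
lemma tendsto_sqrt_mul_integral_cos_pow_even :
    Tendsto (fun n : ℕ => √n * ∫ θ in Ioo 0 (π / 2), cos θ ^ (2 * (n + 1))) atTop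
      (𝓝 (√π / 2)) := by
  have hlim := ((tendsto_poch_succ_div_inv_Gamma (1 / 2)).mul
    (tendsto_natCast_div_add_atTop (1 : ℝ))).const_mul (π / 2)
  rw [Gamma_one_half_eq, mul_one, show π / 2 * (√π)⁻¹ = √π / 2 by
    rw [div_mul_eq_mul_div, ← div_eq_mul_inv, div_sqrt]] at hlim
  refine hlim.congr' ?_
  filter_upwards [eventually_gt_atTop 0] with n hn
  have hn' : (0 : ℝ) < n := Nat.cast_pos.2 hn
  rw [integral_Ioo_cos_pow_even, ← sqrt_eq_rpow, Nat.factorial_succ]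
  push_cast
  field_simp
  rw [sq_sqrt hn'.le]

lemma tendsto_cauchyCosIntegral_div_integral_cos_pow_even {u : ℝ} (hu : 0 < u) (y : ℝ) :
    Tendsto (fun n : ℕ => cauchyCosIntegral (u + 2 * n) y /
      ∫ θ in Ioo 0 (π / 2), cos θ ^ (2 * n)) atTop (𝓝 1) := by
  have hpi : 0 < π / 2 := by positivity
  have hpeak := tendsto_setIntegral_pow_smul_of_unique_maximum_of_isCompact_of_integrableOn
    (μ := volume) (s := Icc 0 (π / 2)) (x₀ := 0) (c := fun θ => cos θ ^ 2)
    (g := fun θ => cos θ ^ (u - 1) * cos (y * θ)) isCompact_Icc (by fun_prop)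
    (fun θ hθ hne => by
      have hs : 0 < sin θ := sin_pos_of_pos_of_lt_pi (hθ.1.lt_of_ne' hne) (by linarith [hθ.2])
      rw [cos_zero, cos_sq']
      nlinarith)
    (fun θ _ => sq_nonneg _) (by simp)
    (by rw [interior_Icc, closure_Ioo hpi.ne]; exact left_mem_Icc.2 hpi.le)
    ((integrableOn_Icc_iff_integrableOn_Ioo enorm_ne_top enorm_ne_top).2
      (integrableOn_cos_rpow_mul_cos (by linarith) y))
    ((continuous_cos.continuousAt.rpow_const (Or.inl (by simp))).mul
      (by fun_prop)).continuousWithinAt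
  simp only [cos_zero, mul_zero, one_rpow, mul_one, integral_Icc_eq_integral_Ioo, smul_eq_mul,
    ← pow_mul] at hpeak
  refine hpeak.congr fun n => ?_
  rw [inv_mul_eq_div, cauchyCosIntegral]
  congr 1
  refine setIntegral_congr_fun measurableSet_Ioo fun θ hθ => ?_
  have hexp : u + 2 * (n : ℝ) - 1 = u - 1 + (2 * n : ℕ) := by push_cast; ring
  rw [hexp, rpow_add_natCast (cos_pos_of_mem_Ioo_zero hθ).ne']
  ring

lemma tendsto_sqrt_mul_cauchyCosIntegral {u : ℝ} (hu : 0 < u) (y : ℝ) :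
    Tendsto (fun n : ℕ => √n * cauchyCosIntegral (u + 2 * (n + 1 : ℕ)) y) atTop
      (𝓝 (√π / 2)) := by
  have hratio := (tendsto_cauchyCosIntegral_div_integral_cos_pow_even hu y).comp
    (tendsto_add_atTop_nat 1)
  have hlim := tendsto_sqrt_mul_integral_cos_pow_even.mul hratio
  rw [mul_one] at hlim
  refine hlim.congr fun n => ?_
  have hpos : 0 < ∫ θ in Ioo 0 (π / 2), cos θ ^ (2 * (n + 1)) := by
    rw [integral_Ioo_cos_pow_even]
    have := poch_pos one_half_pos (n + 1)
    positivity
  simp only [Function.comp_apply]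
  field_simp

lemma cauchyCosIntegral_div_Gamma_mul_Gamma {u : ℝ} (hu : 0 < u) (y : ℝ) :
    cauchyCosIntegral u y / (Gamma ((u + 1) / 2) * Gamma (u / 2)) =
      √π / 2 / (Gamma ((u + 1 + y) / 2) * Gamma ((u + 1 - y) / 2)) := by
  have hleft := ((tendsto_poch_succ_div_inv_Gamma ((u + 1) / 2)).mul
    (tendsto_poch_succ_div_inv_Gamma (u / 2))).mul_const (cauchyCosIntegral u y)
  have hright := ((tendsto_poch_succ_div_inv_Gamma ((u + 1 + y) / 2)).mul
    (tendsto_poch_succ_div_inv_Gamma ((u + 1 - y) / 2))).mul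
    (tendsto_sqrt_mul_cauchyCosIntegral hu y)
  rw [div_eq_inv_mul, div_eq_inv_mul (√π / 2), mul_inv, mul_inv]
  refine tendsto_nhds_unique (hleft.congr' ?_) hright
  filter_upwards [eventually_gt_atTop 0] with n hn
  have hn' : (0 : ℝ) < n := Nat.cast_pos.2 hn
  have hpow : (n : ℝ) ^ ((u + 1 + y) / 2) * (n : ℝ) ^ ((u + 1 - y) / 2) =
      (n : ℝ) ^ ((u + 1) / 2) * (n : ℝ) ^ (u / 2) * √n := by
    rw [sqrt_eq_rpow, ← rpow_add hn', ← rpow_add hn', ← rpow_add hn']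
    ring_nf
  rw [div_mul_div_comm, div_mul_div_comm, mul_mul_mul_comm _ (n.factorial : ℝ),
    mul_mul_mul_comm _ (n.factorial : ℝ), hpow, div_mul_eq_mul_div,
    poch_mul_cauchyCosIntegral hu y (n + 1)]
  field_simp

theorem cauchyCosIntegral_eq {u : ℝ} (hu : 0 < u) (y : ℝ) :
    cauchyCosIntegral u y =
      π * 2 ^ (-u) * Gamma u / (Gamma ((u + 1 + y) / 2) * Gamma ((u + 1 - y) / 2)) := by
  have hdup : Gamma ((u + 1) / 2) * Gamma (u / 2) = Gamma u * (2 * 2 ^ (-u)) * √π := by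
    have h := Gamma_mul_Gamma_add_half (u / 2)
    rwa [mul_comm, ← add_div, mul_div_cancel₀ u two_ne_zero, sub_eq_add_neg,
      rpow_add two_pos, rpow_one] at h
  rw [(div_eq_iff (by positivity)).1 (cauchyCosIntegral_div_Gamma_mul_Gamma hu y), hdup,
    div_mul_eq_mul_div]
  congr 1
  linear_combination 2 ^ (-u) * Gamma u * sq_sqrt pi_pos.le

end CauchyCosIntegral

section Substitution

/-- The substitution `t = halfAngleSubst θ` maps `(0, π / 2)` decreasingly onto `(0, 1)`. It comes
from completing the square in `t * (1 - w * t)`, `w = (1 - √2) / 2`, and turns this product into a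
multiple of `cos θ`. -/
noncomputable def halfAngleSubst (θ : ℝ) : ℝ := (√2 + 1) * (√2 * cos (θ / 2) - 1)

lemma halfAngleSubst_strictAntiOn : StrictAntiOn halfAngleSubst (Icc 0 (π / 2)) := by
  intro x hx y hy hxy
  have hcos : cos (y / 2) < cos (x / 2) := strictAntiOn_cos
    ⟨by linarith [hx.1], by linarith [hx.2, pi_pos]⟩
    ⟨by linarith [hy.1], by linarith [hy.2, pi_pos]⟩ (by linarith)
  unfold halfAngleSubst
  gcongr

lemma halfAngleSubst_image_Ioo : halfAngleSubst '' Ioo 0 (π / 2) = Ioo 0 1 := by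
  have h2 : √2 ^ 2 = 2 := sq_sqrt two_pos.le
  have hzero : halfAngleSubst 0 = 1 := by
    rw [halfAngleSubst, zero_div, cos_zero]
    linear_combination h2
  have hpi : halfAngleSubst (π / 2) = 0 := by
    rw [halfAngleSubst, show π / 2 / 2 = π / 4 by ring, cos_pi_div_four]
    linear_combination (√2 + 1) / 2 * h2
  have hcont : Continuous halfAngleSubst := by unfold halfAngleSubst; fun_prop
  rw [hcont.continuousOn.image_Ioo_of_strictAntiOn (by positivity) halfAngleSubst_strictAntiOn,
    hzero, hpi]

lemma hasDerivAt_halfAngleSubst (θ : ℝ) :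
    HasDerivAt halfAngleSubst (-((√2 + 1) * √2 * (sin (θ / 4) * cos (θ / 4)))) θ := by
  refine (((((hasDerivAt_id θ).div_const 2).cos).const_mul √2).sub_const 1
    |>.const_mul (√2 + 1)).congr_deriv ?_
  have hsin : sin (θ / 2) = 2 * sin (θ / 4) * cos (θ / 4) := by
    rw [← sin_two_mul]
    ring_nf
  rw [id_eq, hsin]
  ring

lemma one_sub_halfAngleSubst (θ : ℝ) :
    1 - halfAngleSubst θ = 2 * √2 * (√2 + 1) * sin (θ / 4) ^ 2 := by
  have hcos : cos (θ / 2) = 1 - 2 * sin (θ / 4) ^ 2 := by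
    rw [show θ / 2 = 2 * (θ / 4) by ring, cos_two_mul, cos_sq']
    ring
  rw [halfAngleSubst, hcos]
  linear_combination -sq_sqrt two_pos.le

lemma halfAngleSubst_mul_one_sub (θ : ℝ) :
    halfAngleSubst θ * (1 - (1 - √2) / 2 * halfAngleSubst θ) = (√2 + 1) / 2 * cos θ := by
  have h2 : √2 ^ 2 = 2 := sq_sqrt two_pos.le
  have hcos : cos θ = 2 * cos (θ / 2) ^ 2 - 1 := by
    rw [← cos_two_mul]
    ring_nf
  rw [halfAngleSubst, hcos]
  grind

lemma sqrt_two_mul_rpow {c : ℝ} (hc : 0 < c) (u : ℝ) :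
    c * √2 * (2 * √2 * c) ^ ((1 / 2 : ℝ) - 1) * (c / 2) ^ (u - 1) =
      c ^ (u - 1 / 2) * 2 ^ (3 / 4 - u) := by
  have hc_pow : c * c ^ ((1 / 2 : ℝ) - 1) * c ^ (u - 1) = c ^ (u - 1 / 2) := by
    rw [← rpow_one_add' hc.le (by norm_num), ← rpow_add hc]
    ring_nf
  have h2_pow : (2 : ℝ) ^ (1 / 2 : ℝ) * (2 * 2 ^ (1 / 2 : ℝ)) ^ ((1 / 2 : ℝ) - 1) / 2 ^ (u - 1) =
      2 ^ (3 / 4 - u) := by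
    rw [← rpow_one_add' two_pos.le (by norm_num), ← rpow_mul two_pos.le, ← rpow_add two_pos,
      ← rpow_sub two_pos]
    ring_nf
  rw [mul_rpow (by positivity) hc.le, div_rpow hc.le two_pos.le, sqrt_eq_rpow, ← hc_pow, ← h2_pow]
  ring

lemma abs_deriv_mul_halfAngleSubst (u : ℝ) {θ : ℝ} (hθ : θ ∈ Ioo 0 (π / 2)) :
    |-((√2 + 1) * √2 * (sin (θ / 4) * cos (θ / 4)))| *
        (halfAngleSubst θ ^ (u - 1) * (1 - halfAngleSubst θ) ^ ((1 / 2 : ℝ) - 1) *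
          (1 - (1 - √2) / 2 * halfAngleSubst θ) ^ (u - 1)) =
      (√2 + 1) ^ (u - 1 / 2) * 2 ^ (3 / 4 - u) * (cos θ ^ (u - 1) * cos (1 / 4 * θ)) := by
  have hs : 0 < sin (θ / 4) :=
    sin_pos_of_pos_of_lt_pi (by linarith [hθ.1]) (by linarith [hθ.2, pi_pos])
  have hc : 0 < cos (θ / 4) :=
    cos_pos_of_mem_Ioo ⟨by linarith [hθ.1, hθ.2], by linarith [hθ.2, pi_pos]⟩
  have hcos := cos_pos_of_mem_Ioo_zero hθ
  have ht : halfAngleSubst θ ∈ Ioo 0 1 := halfAngleSubst_image_Ioo ▸ mem_image_of_mem _ hθ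
  have hw : 0 ≤ 1 - (1 - √2) / 2 * halfAngleSubst θ := by nlinarith [ht.1, one_lt_sqrt_two]
  have hprod : halfAngleSubst θ ^ (u - 1) * (1 - (1 - √2) / 2 * halfAngleSubst θ) ^ (u - 1) =
      ((√2 + 1) / 2) ^ (u - 1) * cos θ ^ (u - 1) := by
    rw [← mul_rpow ht.1.le hw, halfAngleSubst_mul_one_sub, mul_rpow (by positivity) hcos.le]
  have hsin : (sin (θ / 4) ^ 2) ^ ((1 / 2 : ℝ) - 1) = (sin (θ / 4))⁻¹ := by
    rw [← rpow_two, ← rpow_mul hs.le, ← rpow_neg_one]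
    norm_num
  rw [abs_neg, abs_of_pos (by positivity), one_sub_halfAngleSubst,
    mul_rpow (by positivity) (by positivity), hsin, mul_right_comm (halfAngleSubst θ ^ (u - 1)),
    hprod, one_div_mul_eq_div, ← sqrt_two_mul_rpow (by positivity)]
  field_simp

lemma integral_eulerIntegrand_eq_cauchyCosIntegral (u : ℝ) :
    ∫ t in Ioo (0 : ℝ) 1, t ^ (u - 1) * (1 - t) ^ ((1 / 2 : ℝ) - 1) *
        (1 - (1 - √2) / 2 * t) ^ (u - 1) =
      (√2 + 1) ^ (u - 1 / 2) * 2 ^ (3 / 4 - u) * cauchyCosIntegral u (1 / 4) := by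
  rw [← halfAngleSubst_image_Ioo, integral_image_eq_integral_abs_deriv_smul measurableSet_Ioo
      (fun θ _ => (hasDerivAt_halfAngleSubst θ).hasDerivWithinAt)
      (halfAngleSubst_strictAntiOn.injOn.mono Ioo_subset_Icc_self),
    cauchyCosIntegral, ← integral_const_mul]
  exact setIntegral_congr_fun measurableSet_Ioo fun θ hθ => abs_deriv_mul_halfAngleSubst u hθ

end Substitution

lemma sqrt_two_add_one_rpow_neg (a : ℝ) : (√2 + 1) ^ (-a) = (√2 - 1) ^ a := by
  have hinv : √2 - 1 = (√2 + 1)⁻¹ :=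
    eq_inv_of_mul_eq_one_left (by linear_combination sq_sqrt two_pos.le)
  rw [hinv, inv_rpow (by positivity), rpow_neg (by positivity)]

theorem twoF1_K2_value (a : ℝ) (ha : a < 1/2) :
    ∑' n : ℕ,
        poch (a + 1/2) n * poch (1/2 - a) n / (poch (1 - a) n * (Nat.factorial n))
          * ((1 - Real.sqrt 2)/2) ^ n =
      Real.sqrt Real.pi * (2 : ℝ) ^ (2*a - 1/4) * (Real.sqrt 2 - 1) ^ a
          * Real.Gamma (1 - a)
        / (Real.Gamma (5/8 - a/2) * Real.Gamma (7/8 - a/2)) := by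
  have hu : 0 < 1 / 2 - a := by linarith
  have hw : |(1 - √2) / 2| < 1 := by
    rw [abs_lt]
    constructor <;> linarith [one_lt_sqrt_two, sqrt_two_lt_three_halves]
  have euler := (hasSum_poch_eulerIntegral (a + 1 / 2) hu one_half_pos hw).tsum_eq
  rw [show 1 / 2 - a + 1 / 2 = 1 - a by ring, show -(a + 1 / 2) = 1 / 2 - a - 1 by ring,
    integral_eulerIntegrand_eq_cauchyCosIntegral, cauchyCosIntegral_eq hu,
    show 1 / 2 - a - 1 / 2 = -a by ring, sqrt_two_add_one_rpow_neg,
    show (1 / 2 - a + 1 + 1 / 4) / 2 = 7 / 8 - a / 2 by ring,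
    show (1 / 2 - a + 1 - 1 / 4) / 2 = 5 / 8 - a / 2 by ring,
    beta, Gamma_one_half_eq, show 1 / 2 - a + 1 / 2 = 1 - a by ring] at euler
  have hpow : (2 : ℝ) ^ (2 * a - 1 / 4) = 2 ^ (3 / 4 - (1 / 2 - a)) * 2 ^ (-(1 / 2 - a)) := by
    rw [← rpow_add two_pos]
    ring_nf
  have hG := Gamma_pos_of_pos hu
  rw [euler, hpow]
  generalize Gamma (1 / 2 - a) = G at hG ⊢
  field_simp
  rw [sq_sqrt pi_pos.le]
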